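/- (Converse part of Theorem 3, common randomness size.) In the MM-SPIR model (with all constraints), suppose in addition that the common randomness S takes values in F_q^{s} for some natural number s (a string of s symbols from the field with q elements). Then s ≥ ⌈P·L / (N−1)⌉. -/

import Mathlib

/-!
Write `H(· | ·)` for conditional entropy and let `A_n`, `Q_n` be the answers and queries for one
fixed desired set `R`.

Database privacy and reliability make the undesired messages independent of `(W_R, Q_n, A_n)`. By
user privacy the same holds with `R` replaced by any other set of size `P`, the answer and query
being unchanged. Since `P < K`, adding one message at a time then shows that a single pair
`(Q_n, A_n)` is independent of all messages. As the common randomness `S` is independent of the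
user's randomness `F` and the messages, this gives `H(A_n | F) ≤ H(A_n | F, W) ≤ σ`, where
`σ = H(A_1, …, A_N | F, W)`. Given `F` and `W`, the answers are a function of `S`, so `σ ≤ H(S)`.
On the other hand reliability forces `H(W_R) + σ ≤ H(A_1, …, A_N | F) ≤ N σ`. Hence
`H(W_R) ≤ (N - 1) H(S)`.
-/

open Finset

namespace MMSPIR

variable {Ω : Type} [Fintype Ω]

/-- Probability that the random variable `X` takes the value `v`,
under the weight function `p` on the finite sample space `Ω`. -/
noncomputable def prob (p : Ω → ℝ) {V : Type} [DecidableEq V] (X : Ω → V) (v : V) : ℝ :=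
  ∑ ω ∈ Finset.univ.filter (fun ω => X ω = v), p ω

/-- Shannon entropy of `X`, with logarithm taken to base `q`. -/
noncomputable def ent (q : ℕ) (p : Ω → ℝ) {V : Type} [Fintype V] [DecidableEq V]
    (X : Ω → V) : ℝ :=
  -∑ v : V, prob p X v * Real.logb q (prob p X v)

/-- Conditional entropy `H(X | Y)`, base `q`. -/
noncomputable def cent (q : ℕ) (p : Ω → ℝ) {V W : Type} [Fintype V] [DecidableEq V]
    [Fintype W] [DecidableEq W] (X : Ω → V) (Y : Ω → W) : ℝ :=
  ent q p (fun ω => (X ω, Y ω)) - ent q p Y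

/-- Mutual information `I(X ; Y)`, base `q`. -/
noncomputable def mi (q : ℕ) (p : Ω → ℝ) {V W : Type} [Fintype V] [DecidableEq V]
    [Fintype W] [DecidableEq W] (X : Ω → V) (Y : Ω → W) : ℝ :=
  ent q p X + ent q p Y - ent q p (fun ω => (X ω, Y ω))

/-- Conditional mutual information `I(X ; Y | Z)`, base `q`. -/
noncomputable def cmi (q : ℕ) (p : Ω → ℝ) {U V W : Type} [Fintype U] [DecidableEq U]
    [Fintype V] [DecidableEq V] [Fintype W] [DecidableEq W]
    (X : Ω → U) (Y : Ω → V) (Z : Ω → W) : ℝ :=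
  cent q p X Z + cent q p Y Z - cent q p (fun ω => (X ω, Y ω)) Z

/-- `X` and `Y` have the same distribution. -/
def IdentDist (p : Ω → ℝ) {V : Type} [DecidableEq V] (X Y : Ω → V) : Prop :=
  ∀ v, prob p X v = prob p Y v

section DeterminedBy

variable {α ι U V : Type*} {p : α → ℝ}

/-- `X` is almost surely a function of `Y`: outside the null points of `p`, the value of `Y`
determines that of `X`. -/
def DeterminedBy (p : α → ℝ) (X : α → U) (Y : α → V) : Prop :=
  ∀ ω ω', p ω ≠ 0 → p ω' ≠ 0 → Y ω = Y ω' → X ω = X ω'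

lemma DeterminedBy.pi {X : ι → α → U} {Y : α → V} (h : ∀ i, DeterminedBy p (X i) Y) :
    DeterminedBy p (fun ω i ↦ X i ω) Y :=
  fun ω ω' hω hω' hY ↦ funext fun i ↦ h i ω ω' hω hω' hY

lemma determinedBy_pi_apply (X : ι → α → U) (i : ι) : DeterminedBy p (X i) fun ω j ↦ X j ω :=
  fun _ _ _ _ h ↦ congrFun h i

lemma determinedBy_restrict_of_mem (X : ι → α → U) {s : Finset ι} {i : ι} (hi : i ∈ s) :
    DeterminedBy p (X i) fun ω (j : s) ↦ X j ω :=
  determinedBy_pi_apply (fun j : s ↦ X j) ⟨i, hi⟩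

lemma determinedBy_restrict_insert [DecidableEq ι] (X : ι → α → U) (s : Finset ι) (k : ι) :
    DeterminedBy p (fun ω (i : ↥(insert k s)) ↦ X i ω) fun ω ↦ ((fun i : s ↦ X i ω), X k ω) :=
  .pi fun ⟨i, hi⟩ ↦ (Finset.mem_insert.1 hi).elim (by grind [DeterminedBy]) fun his ↦ by
    have := determinedBy_restrict_of_mem (p := p) X his
    grind [DeterminedBy]

lemma determinedBy_restrict_compl [Fintype ι] [DecidableEq ι] (X : ι → α → U) (s : Finset ι) :
    DeterminedBy p (fun ω i ↦ X i ω) fun ω ↦ ((fun i : s ↦ X i ω), fun i : ↥sᶜ ↦ X i ω) := by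
  refine .pi fun i ↦ ?_
  by_cases hi : i ∈ s
  · have := determinedBy_restrict_of_mem (p := p) X hi
    grind [DeterminedBy]
  · have := determinedBy_restrict_of_mem (p := p) X (Finset.mem_compl.2 hi)
    grind [DeterminedBy]

end DeterminedBy

variable {p : Ω → ℝ} {q : ℕ} {T U V V' ι : Type}

section Prob

variable [DecidableEq U] [DecidableEq V]

lemma prob_nonneg (hp : 0 ≤ p) (X : Ω → V) (v : V) : 0 ≤ prob p X v :=
  Finset.sum_nonneg fun ω _ ↦ hp ω

lemma le_prob (hp : 0 ≤ p) (X : Ω → V) (ω : Ω) : p ω ≤ prob p X (X ω) :=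
  Finset.single_le_sum (f := p) (fun i _ ↦ hp i) (Finset.mem_filter.2 ⟨Finset.mem_univ ω, rfl⟩)

lemma prob_pos (hp : 0 ≤ p) (X : Ω → V) {ω : Ω} (hω : p ω ≠ 0) : 0 < prob p X (X ω) :=
  ((hp ω).lt_of_ne' hω).trans_le (le_prob hp X ω)

lemma sum_prob_mul [Fintype V] (X : Ω → V) (g : V → ℝ) :
    ∑ v, prob p X v * g v = ∑ ω, p ω * g (X ω) := by
  rw [← Finset.sum_fiberwise Finset.univ X fun ω ↦ p ω * g (X ω)]
  refine Finset.sum_congr rfl fun v _ ↦ ?_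
  rw [prob, Finset.sum_mul]
  exact Finset.sum_congr rfl fun ω hω ↦ by rw [(Finset.mem_filter.1 hω).2]

lemma sum_prob [Fintype V] (X : Ω → V) : ∑ v, prob p X v = ∑ ω, p ω := by
  simpa only [mul_one] using sum_prob_mul (p := p) X fun _ ↦ 1

lemma prob_comp [Fintype V] (X : Ω → V) (g : V → U) (u : U) :
    prob p (fun ω ↦ g (X ω)) u = ∑ v with g v = u, prob p X v := by
  rw [prob, Finset.sum_filter, Finset.sum_filter]
  simpa only [mul_ite, mul_one, mul_zero] using
    (sum_prob_mul (p := p) X fun v ↦ if g v = u then 1 else 0).symm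

lemma sum_prob_pair [Fintype V] (X : Ω → V) (Z : Ω → U) (z : U) :
    ∑ x, prob p (fun ω ↦ (X ω, Z ω)) (x, z) = prob p Z z := by
  simp only [prob, Prod.mk.injEq, and_comm (b := Z _ = z), ← Finset.filter_filter]
  exact Finset.sum_fiberwise _ X p

end Prob

lemma IdentDist.ent_comp [Fintype U] [DecidableEq U] [Finite V] [DecidableEq V] {X Y : Ω → V}
    (h : IdentDist p X Y) (g : V → U) :
    ent q p (fun ω ↦ g (X ω)) = ent q p fun ω ↦ g (Y ω) := by
  have := Fintype.ofFinite V
  simp only [ent, prob_comp, h _]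

lemma IdentDist.mi_comp [Fintype T] [DecidableEq T] [Fintype U] [DecidableEq U] [Finite V]
    [DecidableEq V] {X Y : Ω → V} (h : IdentDist p X Y) (f : V → T) (g : V → U) :
    mi q p (fun ω ↦ f (X ω)) (fun ω ↦ g (X ω)) = mi q p (fun ω ↦ f (Y ω)) fun ω ↦ g (Y ω) := by
  rw [mi, mi, h.ent_comp f, h.ent_comp g, h.ent_comp fun v ↦ (f v, g v)]

lemma DeterminedBy.prob_le [DecidableEq U] [DecidableEq V] (hp : 0 ≤ p) {X : Ω → U} {Y : Ω → V}
    (h : DeterminedBy p X Y) {ω : Ω} (hω : p ω ≠ 0) : prob p Y (Y ω) ≤ prob p X (X ω) := by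
  rw [prob, prob, Finset.sum_filter, Finset.sum_filter]
  refine Finset.sum_le_sum fun ω' _ ↦ ?_
  by_cases hω' : p ω' = 0
  · simp only [hω', ite_self, le_refl]
  · have hXY := h ω' ω hω' hω
    have hω'_nonneg : 0 ≤ p ω' := hp ω'
    grind

section Shannon

variable [Fintype T] [DecidableEq T] [Fintype U] [DecidableEq U] [Fintype V] [DecidableEq V]
  [Fintype V'] [DecidableEq V'] [DecidableEq ι]

lemma ent_eq_neg_sum (X : Ω → V) :
    ent q p X = -∑ ω, p ω * Real.logb q (prob p X (X ω)) := by
  rw [ent, sum_prob_mul X fun v ↦ Real.logb q (prob p X v)]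

-- Gibbs' inequality, from `log x ≤ x - 1` at `x = g / prob p X`.
lemma ent_le_crossEntropy (hq : 1 < q) (hp : 0 ≤ p) (X : Ω → V) (g : V → ℝ) (hg : 0 ≤ g)
    (hpos : ∀ ω, p ω ≠ 0 → 0 < g (X ω)) (hsum : ∑ v, g v ≤ ∑ ω, p ω) :
    ent q p X ≤ -∑ ω, p ω * Real.logb q (g (X ω)) := by
  have hlog : 0 < Real.log q := Real.log_pos (by exact_mod_cast hq)
  have pointwise (ω : Ω) : p ω * (Real.logb q (g (X ω)) - Real.logb q (prob p X (X ω))) ≤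
      p ω * (g (X ω) / prob p X (X ω) - 1) / Real.log q := by
    by_cases hω : p ω = 0
    · simp only [hω, zero_mul, zero_div, le_refl]
    have hX := prob_pos hp X hω
    rw [mul_div_assoc, Real.logb, Real.logb, ← sub_div, ← Real.log_div (hpos ω hω).ne' hX.ne']
    have := Real.log_le_sub_one_of_pos (div_pos (hpos ω hω) hX)
    gcongr
    exact hp ω
  have ratio : ∑ ω, p ω * (g (X ω) / prob p X (X ω)) ≤ ∑ v, g v := by
    rw [← sum_prob_mul X fun v ↦ g v / prob p X v]
    exact Finset.sum_le_sum fun v _ ↦ by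
      rw [mul_div_left_comm]
      exact mul_le_of_le_one_right (hg v) (div_self_le_one _)
  have total : ∑ ω, p ω * (g (X ω) / prob p X (X ω) - 1) / Real.log q ≤ 0 := by
    rw [← Finset.sum_div]
    refine div_nonpos_of_nonpos_of_nonneg ?_ hlog.le
    simp only [mul_sub, mul_one, Finset.sum_sub_distrib]
    linarith
  have diff := (Finset.sum_le_sum fun ω _ ↦ pointwise ω).trans total
  simp only [mul_sub, Finset.sum_sub_distrib] at diff
  rw [ent_eq_neg_sum]
  linarith

lemma ent_le_logb_card (hq : 1 < q) (hp : p ∈ stdSimplex ℝ Ω) (X : Ω → V) :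
    ent q p X ≤ Real.logb q (Fintype.card V) := by
  have card_pos (ω : Ω) : 0 < (Fintype.card V : ℝ) :=
    Nat.cast_pos.2 (Fintype.card_pos_iff.2 ⟨X ω⟩)
  have key := ent_le_crossEntropy hq hp.1 X (fun _ ↦ (Fintype.card V : ℝ)⁻¹)
    (fun _ ↦ inv_nonneg.2 (Nat.cast_nonneg _)) (fun ω _ ↦ inv_pos.2 (card_pos ω)) (by
      rw [hp.2, Finset.sum_const, Finset.card_univ, nsmul_eq_mul]
      exact mul_inv_le_one)
  simpa only [Real.logb_inv, mul_neg, Finset.sum_neg_distrib, neg_neg, ← Finset.sum_mul, hp.2,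
    one_mul] using key

lemma ent_le_length (hq : 1 < q) (hp : p ∈ stdSimplex ℝ Ω) {s : ℕ} (S : Ω → Fin s → Fin q) :
    ent q p S ≤ s := by
  simpa only [Fintype.card_fun, Fintype.card_fin, Nat.cast_pow, Real.logb_pow,
    Real.logb_self_eq_one (Nat.one_lt_cast.2 hq), mul_one] using ent_le_logb_card hq hp S

lemma DeterminedBy.ent_le (hq : 1 < q) (hp : 0 ≤ p) {X : Ω → U} {Y : Ω → V}
    (h : DeterminedBy p X Y) : ent q p X ≤ ent q p Y := by
  rw [ent_eq_neg_sum, ent_eq_neg_sum]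
  refine neg_le_neg (Finset.sum_le_sum fun ω _ ↦ ?_)
  by_cases hω : p ω = 0
  · simp only [hω, zero_mul, le_refl]
  · exact mul_le_mul_of_nonneg_left (Real.logb_le_logb_of_le (Nat.one_lt_cast.2 hq)
      (prob_pos hp Y hω) (h.prob_le hp hω)) (hp ω)

lemma determinedBy_of_cent_eq_zero (hq : 1 < q) (hp : 0 ≤ p) {X : Ω → U} {Y : Ω → V}
    (h : cent q p X Y = 0) : DeterminedBy p X Y := by
  intro ω ω' hω hω' hY
  by_contra hX
  have pair_le (ω) (hω : p ω ≠ 0) : prob p (fun ω ↦ (X ω, Y ω)) (X ω, Y ω) ≤ prob p Y (Y ω) :=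
    DeterminedBy.prob_le (Y := fun ω ↦ (X ω, Y ω)) hp (by grind [DeterminedBy]) hω
  have pair_lt : prob p (fun ω ↦ (X ω, Y ω)) (X ω, Y ω) < prob p Y (Y ω) := by
    refine Finset.sum_lt_sum_of_subset (i := ω') ?_ ?_ ?_ ((hp ω').lt_of_ne' hω') fun i _ _ ↦ hp i
    · grind
    · grind
    · grind
  have ent_lt : ent q p Y < ent q p fun ω ↦ (X ω, Y ω) := by
    rw [ent_eq_neg_sum, ent_eq_neg_sum]
    refine neg_lt_neg (Finset.sum_lt_sum (fun ω _ ↦ ?_) ⟨ω, Finset.mem_univ ω, ?_⟩)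
    · by_cases hω : p ω = 0
      · simp only [hω, zero_mul, le_refl]
      · exact mul_le_mul_of_nonneg_left (Real.logb_le_logb_of_le (Nat.one_lt_cast.2 hq)
          (prob_pos hp (fun ω ↦ (X ω, Y ω)) hω) (pair_le ω hω)) (hp ω)
    · exact mul_lt_mul_of_pos_left (Real.logb_lt_logb (Nat.one_lt_cast.2 hq)
        (prob_pos hp (fun ω ↦ (X ω, Y ω)) hω) pair_lt) ((hp ω).lt_of_ne' hω)
  exact ent_lt.ne' (sub_eq_zero.1 h)

lemma cmi_nonneg (hq : 1 < q) (hp : 0 ≤ p) (X : Ω → T) (Y : Ω → U) (Z : Ω → V) :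
    0 ≤ cmi q p X Y Z := by
  let PX := prob p fun ω ↦ (X ω, Z ω)
  let PY := prob p fun ω ↦ (Y ω, Z ω)
  let PZ := prob p Z
  let g : (T × U) × V → ℝ := fun v ↦ PX (v.1.1, v.2) * PY (v.1.2, v.2) / PZ v.2
  have sum_g : ∑ v, g v = ∑ ω, p ω := by
    rw [Fintype.sum_prod_type_right, ← sum_prob Z]
    refine Finset.sum_congr rfl fun z _ ↦ ?_
    calc ∑ v : T × U, PX (v.1, z) * PY (v.2, z) / PZ z
        = (∑ x, PX (x, z)) * (∑ y, PY (y, z)) / PZ z := by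
          rw [← Finset.sum_div, Fintype.sum_prod_type, Finset.sum_mul_sum]
      _ = PZ z := by rw [sum_prob_pair X Z z, sum_prob_pair Y Z z, mul_self_div_self]
  have pos_X {ω} : p ω ≠ 0 → 0 < PX (X ω, Z ω) := prob_pos hp fun ω ↦ (X ω, Z ω)
  have pos_Y {ω} : p ω ≠ 0 → 0 < PY (Y ω, Z ω) := prob_pos hp fun ω ↦ (Y ω, Z ω)
  have pos_Z {ω} : p ω ≠ 0 → 0 < PZ (Z ω) := prob_pos hp Z
  have gibbs := ent_le_crossEntropy hq hp (fun ω ↦ ((X ω, Y ω), Z ω)) g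
    (fun v ↦ div_nonneg (mul_nonneg (prob_nonneg hp _ _) (prob_nonneg hp _ _))
      (prob_nonneg hp _ _))
    (fun ω hω ↦ div_pos (mul_pos (pos_X hω) (pos_Y hω)) (pos_Z hω)) sum_g.le
  have logb_g (ω : Ω) : p ω * Real.logb q (g ((X ω, Y ω), Z ω)) =
      p ω * Real.logb q (PX (X ω, Z ω)) + p ω * Real.logb q (PY (Y ω, Z ω))
        - p ω * Real.logb q (PZ (Z ω)) := by
    by_cases hω : p ω = 0
    · simp only [hω, zero_mul, add_zero, sub_zero]
    · rw [Real.logb_div (mul_pos (pos_X hω) (pos_Y hω)).ne' (pos_Z hω).ne',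
        Real.logb_mul (pos_X hω).ne' (pos_Y hω).ne']
      ring
  simp only [logb_g, Finset.sum_sub_distrib, Finset.sum_add_distrib] at gibbs
  rw [cmi, cent, cent, cent, ent_eq_neg_sum fun ω ↦ (X ω, Z ω),
    ent_eq_neg_sum fun ω ↦ (Y ω, Z ω), ent_eq_neg_sum Z]
  linarith

lemma ent_add_ent_le (hq : 1 < q) (hp : 0 ≤ p) {J : Ω → T} {M : Ω → U} {X : Ω → V} {Y : Ω → V'}
    (hMX : DeterminedBy p M X) (hMY : DeterminedBy p M Y)
    (hJ : DeterminedBy p J fun ω ↦ (X ω, Y ω)) :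
    ent q p J + ent q p M ≤ ent q p X + ent q p Y := by
  have hcmi := cmi_nonneg hq hp X Y M
  have hJ' : ent q p J ≤ ent q p fun ω ↦ ((X ω, Y ω), M ω) :=
    DeterminedBy.ent_le hq hp (by grind [DeterminedBy])
  have hX : ent q p (fun ω ↦ (X ω, M ω)) ≤ ent q p X :=
    DeterminedBy.ent_le hq hp (by grind [DeterminedBy])
  have hY : ent q p (fun ω ↦ (Y ω, M ω)) ≤ ent q p Y :=
    DeterminedBy.ent_le hq hp (by grind [DeterminedBy])
  rw [cmi, cent, cent, cent] at hcmi
  linarith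

lemma ent_le_add (hq : 1 < q) (hp : p ∈ stdSimplex ℝ Ω) {J : Ω → T} {X : Ω → U} {Y : Ω → V}
    (hJ : DeterminedBy p J fun ω ↦ (X ω, Y ω)) : ent q p J ≤ ent q p X + ent q p Y := by
  have ent_const : ent q p (fun _ ↦ ()) = 0 := by simp [ent, prob, hp.2]
  have submodular := ent_add_ent_le (M := fun _ ↦ ()) hq hp.1 (fun _ _ _ _ _ ↦ rfl)
    (fun _ _ _ _ _ ↦ rfl) hJ
  linarith

lemma mi_nonneg (hq : 1 < q) (hp : p ∈ stdSimplex ℝ Ω) (X : Ω → U) (Y : Ω → V) :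
    0 ≤ mi q p X Y :=
  sub_nonneg.2 (ent_le_add hq hp fun _ _ _ _ h ↦ h)

lemma mi_mono (hq : 1 < q) (hp : 0 ≤ p) {X : Ω → U} {Y : Ω → V} {X' : Ω → T} {Y' : Ω → V'}
    (hX : DeterminedBy p X' X) (hY : DeterminedBy p Y' Y) : mi q p X' Y' ≤ mi q p X Y := by
  have replace_X : ent q p (fun ω ↦ (X ω, Y ω)) + ent q p X' ≤
      ent q p X + ent q p fun ω ↦ (X' ω, Y ω) :=
    ent_add_ent_le hq hp hX (by grind [DeterminedBy]) (by grind [DeterminedBy])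
  have replace_Y : ent q p (fun ω ↦ (X' ω, Y ω)) + ent q p Y' ≤
      ent q p Y + ent q p fun ω ↦ (X' ω, Y' ω) :=
    ent_add_ent_le hq hp hY (by grind [DeterminedBy]) (by grind [DeterminedBy])
  rw [mi, mi]
  linarith

lemma mi_eq_zero_of_determinedBy (hq : 1 < q) (hp : p ∈ stdSimplex ℝ Ω) {X : Ω → U} {Y : Ω → V}
    {X' : Ω → T} {Y' : Ω → V'} (h : mi q p X Y = 0) (hX : DeterminedBy p X' X)
    (hY : DeterminedBy p Y' Y) : mi q p X' Y' = 0 :=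
  ((mi_mono hq hp.1 hX hY).trans_eq h).antisymm (mi_nonneg hq hp X' Y')

lemma mi_pair_eq_zero (hq : 1 < q) (hp : p ∈ stdSimplex ℝ Ω) {X : Ω → T} {Y : Ω → U} {Z : Ω → V}
    (hX : mi q p X Z = 0) (hY : mi q p Y (fun ω ↦ (X ω, Z ω)) = 0) :
    mi q p (fun ω ↦ (X ω, Y ω)) Z = 0 := by
  refine le_antisymm ?_ (mi_nonneg hq hp _ _)
  have hXY : ent q p (fun ω ↦ (X ω, Y ω)) ≤ ent q p X + ent q p Y :=
    ent_le_add hq hp fun _ _ _ _ h ↦ h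
  have reassoc : ent q p (fun ω ↦ (Y ω, X ω, Z ω)) ≤ ent q p fun ω ↦ ((X ω, Y ω), Z ω) :=
    DeterminedBy.ent_le hq hp.1 (by grind [DeterminedBy])
  rw [mi] at hX hY ⊢
  linarith

lemma mi_eq_zero_of_ent_triple (hq : 1 < q) (hp : p ∈ stdSimplex ℝ Ω) {X : Ω → T} {Y : Ω → U}
    {Z : Ω → V} (h : ent q p (fun ω ↦ (X ω, Y ω, Z ω)) = ent q p X + ent q p Y + ent q p Z) :
    mi q p Z X = 0 ∧ mi q p Y (fun ω ↦ (X ω, Z ω)) = 0 := by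
  have hXZ : ent q p (fun ω ↦ (X ω, Z ω)) ≤ ent q p X + ent q p Z :=
    ent_le_add hq hp fun _ _ _ _ h ↦ h
  have hZX : ent q p (fun ω ↦ (X ω, Z ω)) ≤ ent q p fun ω ↦ (Z ω, X ω) :=
    DeterminedBy.ent_le hq hp.1 (by grind [DeterminedBy])
  have hY : ent q p (fun ω ↦ (X ω, Y ω, Z ω)) ≤ ent q p Y + ent q p fun ω ↦ (X ω, Z ω) :=
    ent_le_add hq hp (by grind [DeterminedBy])
  have hYXZ : ent q p (fun ω ↦ (X ω, Y ω, Z ω)) ≤ ent q p fun ω ↦ (Y ω, X ω, Z ω) :=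
    DeterminedBy.ent_le hq hp.1 (by grind [DeterminedBy])
  constructor
  · exact le_antisymm (by rw [mi]; linarith) (mi_nonneg hq hp _ _)
  · exact le_antisymm (by rw [mi]; linarith) (mi_nonneg hq hp _ _)

lemma cent_anti (hq : 1 < q) (hp : 0 ≤ p) {X : Ω → T} {Y : Ω → U} {Z : Ω → V}
    (h : DeterminedBy p Y Z) : cent q p X Z ≤ cent q p X Y := by
  have submodular : ent q p (fun ω ↦ (X ω, Z ω)) + ent q p Y ≤
      ent q p (fun ω ↦ (X ω, Y ω)) + ent q p Z :=
    ent_add_ent_le hq hp (by grind [DeterminedBy]) h (by grind [DeterminedBy])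
  rw [cent, cent]
  linarith

lemma cent_le_ent (hq : 1 < q) (hp : p ∈ stdSimplex ℝ Ω) {X : Ω → T} {Y : Ω → U} {Z : Ω → V}
    (h : DeterminedBy p X fun ω ↦ (Z ω, Y ω)) : cent q p X Z ≤ ent q p Y := by
  have hXZ : ent q p (fun ω ↦ (X ω, Z ω)) ≤ ent q p Z + ent q p Y :=
    ent_le_add hq hp (by grind [DeterminedBy])
  rw [cent]
  linarith

lemma cent_le_cent_pair (hq : 1 < q) (hp : p ∈ stdSimplex ℝ Ω) {X : Ω → T} {Y : Ω → U}
    {Z : Ω → V} (h : mi q p Y (fun ω ↦ (Z ω, X ω)) = 0) :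
    cent q p X Z ≤ cent q p X fun ω ↦ (Z ω, Y ω) := by
  have hXZ : ent q p (fun ω ↦ (X ω, Z ω)) ≤ ent q p fun ω ↦ (Z ω, X ω) :=
    DeterminedBy.ent_le hq hp.1 (by grind [DeterminedBy])
  have hYZX : ent q p (fun ω ↦ (Y ω, Z ω, X ω)) ≤ ent q p fun ω ↦ (X ω, Z ω, Y ω) :=
    DeterminedBy.ent_le hq hp.1 (by grind [DeterminedBy])
  have hZY : ent q p (fun ω ↦ (Z ω, Y ω)) ≤ ent q p Z + ent q p Y :=
    ent_le_add hq hp fun _ _ _ _ h ↦ h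
  rw [mi] at h
  rw [cent, cent]
  linarith

-- `X` is computed from `Z'` and the independent noise `S`, so `Z → Z' → X` is a Markov chain.
lemma cent_le_cent_of_noise (hq : 1 < q) (hp : p ∈ stdSimplex ℝ Ω) {X : Ω → T} {S : Ω → U}
    {Z : Ω → V} {Z' : Ω → V'} (hS : mi q p S Z = 0) (hZ : DeterminedBy p Z' Z)
    (hX : DeterminedBy p X fun ω ↦ (Z' ω, S ω)) : cent q p X Z' ≤ cent q p X Z := by
  have hZS : ent q p (fun ω ↦ (Z' ω, S ω)) ≤ ent q p Z' + ent q p S :=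
    ent_le_add hq hp fun _ _ _ _ h ↦ h
  have submodular : ent q p (fun ω ↦ (S ω, Z ω)) + ent q p (fun ω ↦ (X ω, Z' ω)) ≤
      ent q p (fun ω ↦ (X ω, Z ω)) + ent q p fun ω ↦ (Z' ω, S ω) :=
    ent_add_ent_le hq hp.1 (by grind [DeterminedBy]) (by grind [DeterminedBy])
      (by grind [DeterminedBy])
  rw [mi] at hS
  rw [cent, cent]
  linarith

lemma ent_add_cent_le (hq : 1 < q) (hp : 0 ≤ p) {X : Ω → T} {Y : Ω → U} {Z : Ω → V}
    (hYZ : mi q p Y Z = 0) (hY : DeterminedBy p Y fun ω ↦ (X ω, Z ω)) :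
    ent q p Y + cent q p X (fun ω ↦ (Z ω, Y ω)) ≤ cent q p X Z := by
  have hXZY : ent q p (fun ω ↦ (X ω, Z ω, Y ω)) ≤ ent q p fun ω ↦ (X ω, Z ω) :=
    DeterminedBy.ent_le hq hp (by grind [DeterminedBy])
  have hZY : ent q p (fun ω ↦ (Y ω, Z ω)) ≤ ent q p fun ω ↦ (Z ω, Y ω) :=
    DeterminedBy.ent_le hq hp (by grind [DeterminedBy])
  rw [mi] at hYZ
  rw [cent, cent]
  linarith

lemma cent_restrict_le_sum (hq : 1 < q) (hp : 0 ≤ p) (X : ι → Ω → U) (Z : Ω → V) (s : Finset ι) :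
    cent q p (fun ω (i : s) ↦ X i ω) Z ≤ ∑ i ∈ s, cent q p (X i) Z := by
  induction s using Finset.induction_on with
  | empty =>
    rw [Finset.sum_empty, cent, sub_nonpos]
    exact DeterminedBy.ent_le hq hp fun _ _ _ _ h ↦ Prod.ext (Subsingleton.elim _ _) h
  | insert k s hk ih =>
    have hX := determinedBy_restrict_insert (p := p) X s k
    have submodular : ent q p (fun ω ↦ ((fun i : ↥(insert k s) ↦ X i ω), Z ω)) + ent q p Z ≤
        ent q p (fun ω ↦ (X k ω, Z ω)) + ent q p fun ω ↦ ((fun i : s ↦ X i ω), Z ω) :=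
      ent_add_ent_le hq hp (by grind [DeterminedBy]) (by grind [DeterminedBy])
        (by grind [DeterminedBy])
    rw [Finset.sum_insert hk]
    rw [cent] at ih ⊢
    rw [cent]
    linarith

variable [Fintype ι]

lemma cent_pi_le_sum (hq : 1 < q) (hp : 0 ≤ p) (X : ι → Ω → U) (Z : Ω → V) :
    cent q p (fun ω i ↦ X i ω) Z ≤ ∑ i, cent q p (X i) Z := by
  have hX : DeterminedBy p (fun ω i ↦ X i ω) fun ω (i : ↥(Finset.univ : Finset ι)) ↦ X i ω :=
    .pi fun i ↦ determinedBy_restrict_of_mem X (Finset.mem_univ i)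
  refine le_trans ?_ (cent_restrict_le_sum hq hp X Z Finset.univ)
  exact sub_le_sub_right (DeterminedBy.ent_le hq hp (by grind [DeterminedBy])) _

lemma ent_pi_le_ent_restrict_add_sum (hq : 1 < q) (hp : p ∈ stdSimplex ℝ Ω) (X : ι → Ω → V)
    (s : Finset ι) :
    ent q p (fun ω i ↦ X i ω) ≤ ent q p (fun ω (i : s) ↦ X i ω) + ∑ i ∈ sᶜ, ent q p (X i) := by
  have split : ent q p (fun ω i ↦ X i ω) ≤
      ent q p fun ω ↦ ((fun i : ↥sᶜ ↦ X i ω), fun i : s ↦ X i ω) := by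
    have := determinedBy_restrict_compl (p := p) X s
    exact DeterminedBy.ent_le hq hp.1 (by grind [DeterminedBy])
  have chain := cent_restrict_le_sum hq hp.1 X (fun ω (i : s) ↦ X i ω) sᶜ
  have drop : ∑ i ∈ sᶜ, cent q p (X i) (fun ω (i : s) ↦ X i ω) ≤ ∑ i ∈ sᶜ, ent q p (X i) :=
    Finset.sum_le_sum fun i _ ↦ cent_le_ent hq hp fun _ _ _ _ h ↦ congrArg Prod.snd h
  rw [cent] at chain
  linarith

lemma mi_restrict_eq_zero (hq : 1 < q) (hp : p ∈ stdSimplex ℝ Ω) {X : ι → Ω → U} {Y : Ω → V}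
    {P : ℕ} (hP : P < Fintype.card ι)
    (h : ∀ R : Finset ι, #R = P →
      mi q p (fun ω (i : ↥Rᶜ) ↦ X i ω) (fun ω ↦ ((fun i : R ↦ X i ω), Y ω)) = 0)
    (s : Finset ι) (hs : #s ≤ P) : mi q p (fun ω (i : s) ↦ X i ω) Y = 0 := by
  induction s using Finset.induction_on with
  | empty =>
    obtain ⟨R, -, hR⟩ := Finset.exists_subset_card_eq (s := (Finset.univ : Finset ι)) hP.le
    exact mi_eq_zero_of_determinedBy hq hp (h R hR) (.pi fun i ↦ absurd i.2 (Finset.notMem_empty _))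
      fun _ _ _ _ h ↦ congrArg Prod.snd h
  | insert k s hk ih =>
    rw [Finset.card_insert_of_notMem hk] at hs
    obtain ⟨R, hsR, hRk, hR⟩ := Finset.exists_subsuperset_card_eq (s := s) (t := {k}ᶜ) (n := P)
      (Finset.subset_compl_singleton.2 hk) (by omega)
      (by rw [Finset.card_compl, Finset.card_singleton]; omega)
    have hkR : k ∉ R := Finset.subset_compl_singleton.1 hRk
    have hXkR : mi q p (X k) (fun ω ↦ ((fun i : s ↦ X i ω), Y ω)) = 0 := by
      have hX : DeterminedBy p (fun ω (i : s) ↦ X i ω) fun ω (i : R) ↦ X i ω :=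
        .pi fun i ↦ determinedBy_restrict_of_mem X (hsR i.2)
      exact mi_eq_zero_of_determinedBy hq hp (h R hR)
        (determinedBy_restrict_of_mem X (Finset.mem_compl.2 hkR)) (by grind [DeterminedBy])
    exact mi_eq_zero_of_determinedBy hq hp (mi_pair_eq_zero hq hp (ih (by omega)) hXkR)
      (determinedBy_restrict_insert X s k) fun _ _ _ _ h ↦ h

lemma mi_pi_eq_zero (hq : 1 < q) (hp : p ∈ stdSimplex ℝ Ω) {X : ι → Ω → U} {Y : Ω → V}
    {P : ℕ} (hP : P < Fintype.card ι)
    (h : ∀ R : Finset ι, #R = P →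
      mi q p (fun ω (i : ↥Rᶜ) ↦ X i ω) (fun ω ↦ ((fun i : R ↦ X i ω), Y ω)) = 0) :
    mi q p (fun ω i ↦ X i ω) Y = 0 := by
  obtain ⟨R, -, hR⟩ := Finset.exists_subset_card_eq (s := (Finset.univ : Finset ι)) hP.le
  exact mi_eq_zero_of_determinedBy hq hp
    (mi_pair_eq_zero hq hp (mi_restrict_eq_zero hq hp hP h R hR.le) (h R hR))
    (determinedBy_restrict_compl X R) fun _ _ _ _ h ↦ h

end Shannon

variable {κ MT QT AT FT ST : Type} [Fintype ι] [DecidableEq ι] [Fintype κ] [DecidableEq κ]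
  [Fintype MT] [DecidableEq MT] [Fintype QT] [DecidableEq QT] [Fintype AT] [DecidableEq AT]
  [Fintype FT] [DecidableEq FT] [Fintype ST] [DecidableEq ST]

/-- An MM-SPIR scheme: the joint law of messages `W`, user randomness `F`, common randomness `S`,
and the queries `Q R n` and answers `A R n` of database `n` when the messages desired are those in
`R`. Only the sets `R` of size `P` are constrained, and the entropies of the messages are left
unspecified. -/
structure IsScheme (q : ℕ) (p : Ω → ℝ) (P : ℕ) (W : ι → Ω → MT) (F : Ω → FT) (S : Ω → ST)
    (Q : Finset ι → κ → Ω → QT) (A : Finset ι → κ → Ω → AT) : Prop where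
  independence : ent q p (fun ω ↦ (F ω, S ω, fun k ↦ W k ω)) =
    ent q p F + ent q p S + ent q p (fun ω k ↦ W k ω)
  query_determinism (R : Finset ι) : #R = P → cent q p (fun ω n ↦ Q R n ω) F = 0
  answer_determinism (R : Finset ι) : #R = P → ∀ n,
    cent q p (A R n) (fun ω ↦ (Q R n ω, (fun k ↦ W k ω), S ω)) = 0
  reliability (R : Finset ι) : #R = P →
    cent q p (fun ω (k : R) ↦ W k ω) (fun ω ↦ ((fun n ↦ A R n ω), F ω)) = 0
  user_privacy (n : κ) (R R' : Finset ι) : #R = P → #R' = P →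
    IdentDist p (fun ω ↦ (Q R n ω, A R n ω, (fun k ↦ W k ω), S ω))
      (fun ω ↦ (Q R' n ω, A R' n ω, (fun k ↦ W k ω), S ω))
  database_privacy (R : Finset ι) : #R = P →
    mi q p (fun ω (k : ↥Rᶜ) ↦ W k ω)
      (fun ω ↦ ((fun n ↦ Q R n ω), (fun n ↦ A R n ω), F ω)) = 0

namespace IsScheme

variable {P : ℕ} {W : ι → Ω → MT} {F : Ω → FT} {S : Ω → ST} {Q : Finset ι → κ → Ω → QT}
  {A : Finset ι → κ → Ω → AT} {R : Finset ι}

lemma query_determinedBy (h : IsScheme q p P W F S Q A) (hq : 1 < q) (hp : 0 ≤ p) (hR : #R = P)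
    (n : κ) : DeterminedBy p (Q R n) F := fun ω ω' hω hω' hF ↦
  congrFun (determinedBy_of_cent_eq_zero hq hp (h.query_determinism R hR) ω ω' hω hω' hF) n

lemma answer_determinedBy (h : IsScheme q p P W F S Q A) (hq : 1 < q) (hp : 0 ≤ p) (hR : #R = P)
    (n : κ) : DeterminedBy p (A R n) fun ω ↦ ((Q R n ω, fun k ↦ W k ω), S ω) := by
  have := determinedBy_of_cent_eq_zero hq hp (h.answer_determinism R hR n)
  grind [DeterminedBy]

lemma answers_determinedBy (h : IsScheme q p P W F S Q A) (hq : 1 < q) (hp : 0 ≤ p) (hR : #R = P) :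
    DeterminedBy p (fun ω n ↦ A R n ω) fun ω ↦ ((F ω, fun k ↦ W k ω), S ω) := by
  refine .pi fun n ↦ ?_
  have hQ := h.query_determinedBy hq hp hR n
  have hA := h.answer_determinedBy hq hp hR n
  grind [DeterminedBy]

lemma mi_undesired_eq_zero (h : IsScheme q p P W F S Q A) (hq : 1 < q) (hp : p ∈ stdSimplex ℝ Ω)
    {R' : Finset ι} (hR : #R = P) (hR' : #R' = P) (n : κ) :
    mi q p (fun ω (k : ↥R'ᶜ) ↦ W k ω)
      (fun ω ↦ ((fun k : R' ↦ W k ω), Q R n ω, A R n ω)) = 0 := by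
  rw [(h.user_privacy n R R' hR hR').mi_comp (fun v (k : ↥R'ᶜ) ↦ v.2.2.1 k)
    fun v ↦ ((fun k : R' ↦ v.2.2.1 k), v.1, v.2.1)]
  have hW := determinedBy_of_cent_eq_zero hq hp.1 (h.reliability R' hR')
  have hQ := determinedBy_pi_apply (p := p) (Q R') n
  have hA := determinedBy_pi_apply (p := p) (A R') n
  refine mi_eq_zero_of_determinedBy hq hp (h.database_privacy R' hR') (fun _ _ _ _ h ↦ h) ?_
  grind [DeterminedBy]

lemma mi_messages_eq_zero (h : IsScheme q p P W F S Q A) (hq : 1 < q) (hp : p ∈ stdSimplex ℝ Ω)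
    (hP : P < Fintype.card ι) (hR : #R = P) (n : κ) :
    mi q p (fun ω k ↦ W k ω) (fun ω ↦ (Q R n ω, A R n ω)) = 0 :=
  mi_pi_eq_zero hq hp hP fun _ hR' ↦ h.mi_undesired_eq_zero hq hp hR hR' n

lemma cent_answer_le (h : IsScheme q p P W F S Q A) (hq : 1 < q) (hp : p ∈ stdSimplex ℝ Ω)
    (hP : P < Fintype.card ι) (hR : #R = P) (n : κ) :
    cent q p (A R n) F ≤ cent q p (A R n) fun ω ↦ (F ω, fun k ↦ W k ω) := by
  have hQ := h.query_determinedBy hq hp.1 hR n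
  calc cent q p (A R n) F
      ≤ cent q p (A R n) (Q R n) := cent_anti hq hp.1 hQ
    _ ≤ cent q p (A R n) fun ω ↦ (Q R n ω, fun k ↦ W k ω) :=
      cent_le_cent_pair hq hp (h.mi_messages_eq_zero hq hp hP hR n)
    _ ≤ cent q p (A R n) fun ω ↦ (F ω, fun k ↦ W k ω) :=
      cent_le_cent_of_noise hq hp (mi_eq_zero_of_ent_triple hq hp h.independence).2
        (by grind [DeterminedBy]) (h.answer_determinedBy hq hp.1 hR n)

lemma cent_answers_le (h : IsScheme q p P W F S Q A) (hq : 1 < q) (hp : p ∈ stdSimplex ℝ Ω)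
    (hP : P < Fintype.card ι) (hR : #R = P) :
    cent q p (fun ω n ↦ A R n ω) F ≤
      Fintype.card κ * cent q p (fun ω n ↦ A R n ω) fun ω ↦ (F ω, fun k ↦ W k ω) := by
  calc cent q p (fun ω n ↦ A R n ω) F
      ≤ ∑ n, cent q p (A R n) F := cent_pi_le_sum hq hp.1 (A R) F
    _ ≤ ∑ _n : κ, cent q p (fun ω n ↦ A R n ω) fun ω ↦ (F ω, fun k ↦ W k ω) := by
      refine Finset.sum_le_sum fun n _ ↦ (h.cent_answer_le hq hp hP hR n).trans ?_
      have hA := determinedBy_pi_apply (p := p) (A R) n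
      exact sub_le_sub_right (DeterminedBy.ent_le hq hp.1 (by grind [DeterminedBy])) _
    _ = _ := by rw [Finset.sum_const, Finset.card_univ, nsmul_eq_mul]

lemma ent_desired_add_cent_answers_le (h : IsScheme q p P W F S Q A) (hq : 1 < q)
    (hp : p ∈ stdSimplex ℝ Ω) (hR : #R = P) :
    ent q p (fun ω (k : R) ↦ W k ω) +
      cent q p (fun ω n ↦ A R n ω) (fun ω ↦ (F ω, fun k ↦ W k ω)) ≤
        cent q p (fun ω n ↦ A R n ω) F := by
  have hWF : mi q p (fun ω (k : R) ↦ W k ω) F = 0 :=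
    mi_eq_zero_of_determinedBy hq hp (mi_eq_zero_of_ent_triple hq hp h.independence).1
      (.pi fun k ↦ determinedBy_pi_apply W k) fun _ _ _ _ h ↦ h
  have hW : DeterminedBy p (fun ω (k : R) ↦ W k ω) fun ω k ↦ W k ω :=
    .pi fun k ↦ determinedBy_pi_apply W k
  refine le_trans ?_ (ent_add_cent_le hq hp.1 hWF
    (determinedBy_of_cent_eq_zero hq hp.1 (h.reliability R hR)))
  gcongr
  exact cent_anti hq hp.1 (by grind [DeterminedBy])

lemma ent_desired_le [Nonempty κ] (h : IsScheme q p P W F S Q A) (hq : 1 < q)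
    (hp : p ∈ stdSimplex ℝ Ω) (hP : P < Fintype.card ι) (hR : #R = P) :
    ent q p (fun ω (k : R) ↦ W k ω) ≤ (Fintype.card κ - 1) * ent q p S := by
  have lower := h.ent_desired_add_cent_answers_le hq hp hR
  have upper := h.cent_answers_le hq hp hP hR
  have hS := cent_le_ent hq hp (h.answers_determinedBy hq hp.1 hR)
  have card_pos : (1 : ℝ) ≤ Fintype.card κ := Nat.one_le_cast.2 Fintype.card_pos
  have := mul_le_mul_of_nonneg_left hS (sub_nonneg.2 card_pos)
  linarith

end IsScheme

theorem common_randomness_size_converse_general {P s : ℕ} {L : ℝ} {W : ι → Ω → MT} {F : Ω → FT}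
    {S : Ω → Fin s → Fin q} {Q : Finset ι → κ → Ω → QT} {A : Finset ι → κ → Ω → AT}
    (h : IsScheme q p P W F S Q A) (hq : 1 < q) (hp : p ∈ stdSimplex ℝ Ω)
    (hκ : 1 < Fintype.card κ) (hP : P < Fintype.card ι) (hWk : ∀ k, ent q p (W k) = L)
    (hW : ent q p (fun ω k ↦ W k ω) = Fintype.card ι * L) :
    ⌈P * L / ((Fintype.card κ : ℝ) - 1)⌉₊ ≤ s := by
  have : Nonempty κ := Fintype.card_pos_iff.1 (by omega)
  obtain ⟨R, -, hR⟩ := Finset.exists_subset_card_eq (s := (Finset.univ : Finset ι)) hP.le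
  have hdesired := ent_pi_le_ent_restrict_add_sum hq hp W R
  simp only [hWk, hW, Finset.sum_const, Finset.card_compl, hR, nsmul_eq_mul,
    Nat.cast_sub hP.le] at hdesired
  have hN : (0 : ℝ) < Fintype.card κ - 1 := sub_pos.2 (Nat.one_lt_cast.2 hκ)
  refine Nat.ceil_le.2 ((div_le_iff₀' hN).2 ?_)
  calc P * L ≤ ent q p fun ω (k : R) ↦ W k ω := by linarith
    _ ≤ (Fintype.card κ - 1) * ent q p S := h.ent_desired_le hq hp hP hR
    _ ≤ (Fintype.card κ - 1) * s := mul_le_mul_of_nonneg_left (ent_le_length hq hp S) hN.le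

theorem common_randomness_size_converse
    {Ω MT QT AT FT : Type}
    [Fintype Ω] [Fintype MT] [DecidableEq MT] [Fintype QT] [DecidableEq QT]
    [Fintype AT] [DecidableEq AT] [Fintype FT] [DecidableEq FT]
    (N K P L q : ℕ) (hN : 2 ≤ N) (hK : 2 ≤ K) (hP1 : 1 ≤ P) (hP2 : P ≤ K - 1)
    (hL : 1 ≤ L) (hq : IsPrimePow q)
    (p : Ω → ℝ) (hp0 : ∀ ω, 0 ≤ p ω) (hp1 : (∑ ω, p ω) = 1)
    (W : Fin K → Ω → MT) (F : Ω → FT)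
    (s : ℕ) (S : Ω → (Fin s → Fin q))
    (Q : Finset (Fin K) → Fin N → Ω → QT)
    (A : Finset (Fin K) → Fin N → Ω → AT)
    (hWk : ∀ k, ent q p (W k) = (L : ℝ))
    (hWall : ent q p (fun ω (k : Fin K) => W k ω) = (K : ℝ) * L)
    (hind : ent q p (fun ω => (F ω, S ω, fun k : Fin K => W k ω)) =
      ent q p F + ent q p S + ent q p (fun ω (k : Fin K) => W k ω))
    (hQdet : ∀ 𝒫₀ : Finset (Fin K), 𝒫₀.card = P →
      cent q p (fun ω (n : Fin N) => Q 𝒫₀ n ω) F = 0)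
    (hAdet : ∀ 𝒫₀ : Finset (Fin K), 𝒫₀.card = P → ∀ n : Fin N,
      cent q p (A 𝒫₀ n) (fun ω => (Q 𝒫₀ n ω, (fun k : Fin K => W k ω), S ω)) = 0)
    (hrel : ∀ 𝒫₀ : Finset (Fin K), 𝒫₀.card = P →
      cent q p (fun ω (k : {x : Fin K // x ∈ 𝒫₀}) => W k.1 ω)
        (fun ω => ((fun n : Fin N => A 𝒫₀ n ω), F ω)) = 0)
    (hupriv : ∀ (n : Fin N) (𝒫₁ 𝒫₂ : Finset (Fin K)), 𝒫₁.card = P → 𝒫₂.card = P →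
      IdentDist p
        (fun ω => (Q 𝒫₁ n ω, A 𝒫₁ n ω, (fun k : Fin K => W k ω), S ω))
        (fun ω => (Q 𝒫₂ n ω, A 𝒫₂ n ω, (fun k : Fin K => W k ω), S ω)))
    (hdpriv : ∀ 𝒫₀ : Finset (Fin K), 𝒫₀.card = P →
      mi q p (fun ω (k : {x : Fin K // x ∈ 𝒫₀ᶜ}) => W k.1 ω)
        (fun ω => ((fun n : Fin N => Q 𝒫₀ n ω), (fun n : Fin N => A 𝒫₀ n ω), F ω)) = 0)
    : Nat.ceil ((P : ℝ) * L / ((N : ℝ) - 1)) ≤ s := by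
  simpa only [Fintype.card_fin] using common_randomness_size_converse_general
    ⟨hind, hQdet, hAdet, hrel, hupriv, hdpriv⟩ hq.one_lt ⟨hp0, hp1⟩
    (by rw [Fintype.card_fin]; omega) (by rw [Fintype.card_fin]; omega) hWk
    (by rw [Fintype.card_fin]; exact hWall)

end MMSPIR
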